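/- arXiv:2510.06900 — 2 statements merged into one kernel-verified Lean document; each statement's English description precedes it below -/
import Mathlib

section
/- For every distortion function η and every 0 < s < 1 there exists a compact set E ⊆ [0,1] with dim_H E < 1 such that for every metric space Y and every η-quasisymmetry f : E → Y one has dim_H f(E) ≥ s. -/
open Set Metric MeasureTheory ProbabilityTheory Filter
open scoped ENNReal NNReal Classical

noncomputable section

/-- A distortion function: a homeomorphism of `[0,∞)` onto itself
(equivalently, a continuous strictly increasing surjection of `[0,∞)` with `η 0 = 0`). -/
def IsDistortion (η : ℝ → ℝ) : Prop :=
  ContinuousOn η (Set.Ici 0) ∧ StrictMonoOn η (Set.Ici 0) ∧ η 0 = 0 ∧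
    Set.SurjOn η (Set.Ici 0) (Set.Ici 0)

/-- `f` is an `η`-quasisymmetry on the set `E`:
it is injective on `E` and satisfies the quasisymmetry inequality on points of `E`. -/
def IsQSOn {X Y : Type*} [MetricSpace X] [MetricSpace Y] (η : ℝ → ℝ) (f : X → Y)
    (E : Set X) : Prop :=
  Set.InjOn f E ∧ ∀ x ∈ E, ∀ y ∈ E, ∀ z ∈ E, x ≠ z →
    dist (f x) (f y) ≤ η (dist x y / dist x z) * dist (f x) (f z)

/-- `f` is a `β`-power quasisymmetry on `E`: an `η`-quasisymmetry with
`η t = C * max (t ^ β) (t ^ (1 / β))` for some `C > 0`. -/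
def IsPowerQSOn {X Y : Type*} [MetricSpace X] [MetricSpace Y] (β : ℝ) (f : X → Y)
    (E : Set X) : Prop :=
  ∃ C : ℝ, 0 < C ∧ IsQSOn (fun t => C * max (t ^ β) (t ^ (1 / β))) f E

/-- Distance between two sets: `inf {dist a b : a ∈ A, b ∈ B}`. -/
def setDist {X : Type*} [MetricSpace X] (A B : Set X) : ℝ :=
  sInf (Set.image2 dist A B)

/-- The closed axis-parallel cube with lower corner `c` and side length `l`. -/
def cube {d : ℕ} (c : Fin d → ℝ) (l : ℝ) : Set (EuclideanSpace ℝ (Fin d)) :=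
  {x | ∀ i, c i ≤ x i ∧ x i ≤ c i + l}

/-- Lower corner of the subcube with address `a` when the cube with lower corner `c` and
side `l` is divided into `K ^ d` congruent subcubes. -/
def childCorner {d : ℕ} (c : Fin d → ℝ) (l : ℝ) (K : ℕ) (a : Fin d → Fin K) : Fin d → ℝ :=
  fun i => c i + l / K * (a i : ℝ)

/-- Side length `N ^ (-m*n)` of level-`n` cubes in the `(N,m)`-fat Cantor construction. -/
def fatSide (N m n : ℕ) : ℝ := ((N : ℝ) ^ (m * n))⁻¹

/-- `𝓕` is the sequence of families of cubes of an `(N,m)`-fat Cantor construction in `[0,1]^d`: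
`𝓕 0 = {[0,1]^d}`, and each cube `Q ∈ 𝓕 n` is divided into `N^(m*d)` congruent subcubes of which
exactly one is removed, `𝓕 (n+1)` consisting of all retained subcubes. -/
def IsFatCantorFamilies (d N m : ℕ) (𝓕 : ℕ → Set (Set (EuclideanSpace ℝ (Fin d)))) : Prop :=
  𝓕 0 = {cube (fun _ => 0) 1} ∧
  (∀ n, ∀ Q ∈ 𝓕 n, ∃ c : Fin d → ℝ, Q = cube c (fatSide N m n) ∧
    ∃ a₀ : Fin d → Fin (N ^ m),
      {Q' ∈ 𝓕 (n + 1) | Q' ⊆ Q} =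
        {Q' | ∃ a : Fin d → Fin (N ^ m), a ≠ a₀ ∧
          Q' = cube (childCorner c (fatSide N m n) (N ^ m) a) (fatSide N m (n + 1))}) ∧
  (∀ n, ∀ Q' ∈ 𝓕 (n + 1), ∃ Q ∈ 𝓕 n, Q' ⊆ Q)

/-- `F` is an `(N,m)`-fat Cantor set in `[0,1]^d`. -/
def IsFatCantorSet (d N m : ℕ) (F : Set (EuclideanSpace ℝ (Fin d))) : Prop :=
  ∃ 𝓕, IsFatCantorFamilies d N m 𝓕 ∧ F = ⋂ n, ⋃₀ 𝓕 n

/-- Side length `∏_{m=1}^n (N m)⁻¹` of level-`n` cubes of a dense-Cantor construction with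
subdivision sequence `N`. -/
def denseSide (N : ℕ → ℕ) (n : ℕ) : ℝ := ∏ m ∈ Finset.Icc 1 n, ((N m : ℝ))⁻¹

/-- `𝓔` is the sequence of families of cubes of a dense-Cantor construction in `[0,1]^d`
with subdivision sequence `N`: `𝓔 0 = {[0,1]^d}`, every cube of `𝓔 (n+1)` is one of the
`(N (n+1))^d` congruent subcubes of a cube of `𝓔 n`, and every cube of `𝓔 n` has at least one
retained subcube in `𝓔 (n+1)`. -/
def IsDenseCantorFamilies (d : ℕ) (N : ℕ → ℕ)
    (𝓔 : ℕ → Set (Set (EuclideanSpace ℝ (Fin d)))) : Prop :=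
  𝓔 0 = {cube (fun _ => 0) 1} ∧
  (∀ n, ∀ Q' ∈ 𝓔 (n + 1), ∃ Q ∈ 𝓔 n, Q' ⊆ Q ∧ ∃ c : Fin d → ℝ, Q = cube c (denseSide N n) ∧
      ∃ a : Fin d → Fin (N (n + 1)),
        Q' = cube (childCorner c (denseSide N n) (N (n + 1)) a) (denseSide N (n + 1))) ∧
  (∀ n, ∀ Q ∈ 𝓔 n, ∃ Q' ∈ 𝓔 (n + 1), Q' ⊆ Q)

/-- A (possibly degenerate) line segment parallel to the `d`-th coordinate direction
(the kernel of the projection to the first `d-1` coordinates). -/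
def IsVerticalSeg {d : ℕ} (A : Set (EuclideanSpace ℝ (Fin d))) : Prop :=
  ∃ x y : EuclideanSpace ℝ (Fin d), A = segment ℝ x y ∧
    ∀ i : Fin d, (i : ℕ) < d - 1 → x i = y i

/-- The dense-Cantor construction `𝓔` is `(Δ_n)_n`-dense: for all sufficiently large `n` and
every `Q ∈ 𝓔 n`, every vertical line segment contained in `Q \ ⋃ 𝓔 (n+1)` has diameter at most
`Δ (n+1) * diam Q`. -/
def IsDeltaDense {d : ℕ} (Δ : ℕ → ℝ) (𝓔 : ℕ → Set (Set (EuclideanSpace ℝ (Fin d)))) : Prop :=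
  ∃ n₀ : ℕ, ∀ n, n₀ ≤ n → ∀ Q ∈ 𝓔 n, ∀ A : Set (EuclideanSpace ℝ (Fin d)),
    IsVerticalSeg A → A ⊆ Q \ ⋃₀ 𝓔 (n + 1) →
      Metric.diam A ≤ Δ (n + 1) * Metric.diam Q

/-- The dyadic cube of level `k` in `[0,1]^d` with address `a`. -/
def dyCube (d k : ℕ) (a : Fin d → Fin (2 ^ k)) : Set (EuclideanSpace ℝ (Fin d)) :=
  cube (fun i => (a i : ℝ) / 2 ^ k) (((2 : ℝ) ^ k)⁻¹)

/-- Lower corner of the level-`n` `N`-adic cube of `[0,1]^d` with address word `w`. -/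
def fatCorner (d N : ℕ) {n : ℕ} (w : Fin n → Fin d → Fin N) : Fin d → ℝ :=
  fun i => ∑ j : Fin n, ((N : ℝ) ^ (j.val + 1))⁻¹ * (w j i : ℝ)

/-- In fractal percolation with retention coins `X`, the cube with address word `w` survives if
all of its ancestors (including itself) are retained. -/
def FatSurvives {Ω : Type*} {d N : ℕ} (X : ∀ n : ℕ, (Fin n → Fin d → Fin N) → Ω → Bool)
    (ω : Ω) {n : ℕ} (w : Fin n → Fin d → Fin N) : Prop :=
  ∀ m : ℕ, ∀ h : m ≤ n, 1 ≤ m → X m (fun j => w (Fin.castLE h j)) ω = true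

/-- The fractal percolation limit set determined by the retention coins `X` at sample `ω`:
the intersection over `n` of the unions of surviving level-`n` `N`-adic cubes. -/
def fatPerc {Ω : Type*} (d N : ℕ) (X : ∀ n : ℕ, (Fin n → Fin d → Fin N) → Ω → Bool)
    (ω : Ω) : Set (EuclideanSpace ℝ (Fin d)) :=
  ⋂ n : ℕ, ⋃ w : Fin n → Fin d → Fin N, ⋃ (_ : FatSurvives X ω w),
    cube (fatCorner d N w) (((N : ℝ) ^ n)⁻¹)

/-- Lower corner of the level-`n` cube with address word `w` in the subdivision scheme where the
level-`j` cubes have side `denseSide N j`. -/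
def denseCorner (d : ℕ) (N : ℕ → ℕ) {n : ℕ}
    (w : (j : Fin n) → Fin d → Fin (N (j.val + 1))) : Fin d → ℝ :=
  fun i => ∑ j : Fin n, denseSide N (j.val + 1) * (w j i : ℝ)

/-- Survival of the cube with address word `w` in dense fractal percolation with coins `X`. -/
def DenseSurvives {Ω : Type*} {d : ℕ} {N : ℕ → ℕ}
    (X : ∀ n : ℕ, ((j : Fin n) → Fin d → Fin (N (j.val + 1))) → Ω → Bool) (ω : Ω) {n : ℕ}
    (w : (j : Fin n) → Fin d → Fin (N (j.val + 1))) : Prop :=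
  ∀ m : ℕ, ∀ h : m ≤ n, 1 ≤ m → X m (fun j => w (Fin.castLE h j)) ω = true

/-- The dense fractal percolation limit set determined by the retention coins `X` at `ω`. -/
def densePerc {Ω : Type*} (d : ℕ) (N : ℕ → ℕ)
    (X : ∀ n : ℕ, ((j : Fin n) → Fin d → Fin (N (j.val + 1))) → Ω → Bool) (ω : Ω) :
    Set (EuclideanSpace ℝ (Fin d)) :=
  ⋂ n : ℕ, ⋃ w : (j : Fin n) → Fin d → Fin (N (j.val + 1)), ⋃ (_ : DenseSurvives X ω w),
    cube (denseCorner d N w) (denseSide N n)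

/-- The function `g_N (s) = 1 - (1-s)^N - N s (1-s)^(N-1) + N^(-5)`. -/
def gFun (N : ℕ) (s : ℝ) : ℝ :=
  1 - (1 - s) ^ N - N * s * (1 - s) ^ (N - 1) + ((N : ℝ) ^ 5)⁻¹

end

/-!
`E` is the Cantor set of numbers in `[0, 1]` with only even digits in base `2 * k + 1`, coded by
sequences `a : ℕ → Fin (k + 1)`; its dimension is `log (k + 1) / log (2 * k + 1) < 1`.

Let `f` be an `η`-quasisymmetry on `E`. A cylinder of the next generation is `k` times smaller than
its parent, so the diameter of its image shrinks by a factor `ε = η (1 / k)`. On the other hand,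
consecutive siblings are only boundedly far apart relative to their size, so joining them in a chain
bounds the image of a cylinder by `K` times the sum of the image diameters of its children, with
`K = 2 * (η 6 + 1)` independent of `k`. Hence, once `K * ε ^ (1 - s) ≤ 1`, the `s`-th power of the
image diameter of a cylinder is at most the sum of those of its children. As a set contained in
`f '' E` lies in the image of a cylinder of comparable diameter, every countable cover of `f '' E`
has `∑ diam ^ s` bounded below, and `dimH (f '' E) ≥ s`.
-/

open Function Topology

section Symbolic

variable {E : ℕ → Type*}

theorem mem_cylinder_update_succ {x a : ∀ n, E n} {n : ℕ} {j : E n} :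
    x ∈ PiNat.cylinder (update a n j) (n + 1) ↔ x ∈ PiNat.cylinder a n ∧ x n = j := by
  simp only [PiNat.mem_cylinder_iff, Nat.forall_lt_succ_right, update_self]
  refine and_congr_left' (forall₂_congr fun i hi => ?_)
  rw [update_of_ne hi.ne]

theorem exists_forall_cylinder [Nonempty (∀ n, E n)] {P : Set (∀ n, E n) → Prop} (h0 : P univ)
    (hsucc : ∀ a n, P (PiNat.cylinder a n) → ∃ j, P (PiNat.cylinder (update a n j) (n + 1))) :
    ∃ a, ∀ n, P (PiNat.cylinder a n) := by
  obtain ⟨x⟩ := ‹Nonempty (∀ n, E n)›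
  choose g hg using hsucc
  let X : (n : ℕ) → {a // P (PiNat.cylinder a n)} := fun n =>
    Nat.rec ⟨x, by rwa [PiNat.cylinder_zero]⟩
      (fun n a => ⟨update a.1 n (g a.1 n a.2), hg a.1 n a.2⟩) n
  let b : ∀ n, E n := fun n => (X (n + 1)).1 n
  have hXb : ∀ n, (X n).1 ∈ PiNat.cylinder b n := by
    intro n
    induction n with
    | zero => simp
    | succ n ih =>
      intro i hi
      rcases Nat.lt_succ_iff_lt_or_eq.1 hi with hin | rfl
      · exact (update_of_ne hin.ne _ _).trans (ih i hin)
      · rfl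
  exact ⟨b, fun n => PiNat.mem_cylinder_iff_eq.1 (hXb n) ▸ (X n).2⟩

theorem sum_indicator_cylinder_update {n : ℕ} [Fintype (E n)] {M : Type*} [AddCommMonoid M]
    (f : (∀ n, E n) → M) (x a : ∀ n, E n) :
    ∑ j, (PiNat.cylinder (update a n j) (n + 1)).indicator f x =
      (PiNat.cylinder a n).indicator f x := by
  classical
  simp only [indicator_apply, mem_cylinder_update_succ]
  by_cases hx : x ∈ PiNat.cylinder a n <;> simp [hx]

theorem le_tsum_of_le_sum_cylinder_update [Nonempty (∀ n, E n)] [∀ n, Fintype (E n)]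
    {h : Set (∀ n, E n) → ℝ≥0∞}
    (hsub : ∀ a n, h (PiNat.cylinder a n) ≤ ∑ j, h (PiNat.cylinder (update a n j) (n + 1)))
    {ι : Type*} {c : ι → ∀ n, E n} {m : ι → ℕ}
    (hcover : ∀ a, ∃ i, a ∈ PiNat.cylinder (c i) (m i)) :
    h univ ≤ ∑' i, h (PiNat.cylinder (c i) (m i)) := by
  -- `ν` puts a point mass `h (cylinder (c i) (m i))` at each `c i`. If it were too small on the
  -- whole space, it would be too small on a nested sequence of cylinders shrinking to a point `a`,
  -- but the member of the cover containing `a` is one of these.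
  let ν : Set (∀ n, E n) → ℝ≥0∞ := fun U =>
    ∑' i, U.indicator (fun _ => h (PiNat.cylinder (c i) (m i))) (c i)
  have hν : ∀ a n, ∑ j, ν (PiNat.cylinder (update a n j) (n + 1)) = ν (PiNat.cylinder a n) := by
    intro a n
    rw [← Summable.tsum_finsetSum fun _ _ => ENNReal.summable]
    simp only [sum_indicator_cylinder_update, ν]
  by_contra! hlt
  obtain ⟨a, ha⟩ : ∃ a, ∀ n, ν (PiNat.cylinder a n) < h (PiNat.cylinder a n) := by
    refine exists_forall_cylinder (P := fun U => ν U < h U) (by simpa [ν] using hlt) ?_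
    intro a n hlt
    by_contra! hge
    have : h (PiNat.cylinder a n) ≤ ν (PiNat.cylinder a n) :=
      calc h (PiNat.cylinder a n)
          ≤ ∑ j, h (PiNat.cylinder (update a n j) (n + 1)) := hsub a n
        _ ≤ ∑ j, ν (PiNat.cylinder (update a n j) (n + 1)) := Finset.sum_le_sum fun j _ => hge j
        _ = ν (PiNat.cylinder a n) := hν a n
    exact this.not_gt hlt
  obtain ⟨i, hi⟩ := hcover a
  have hmass : h (PiNat.cylinder (c i) (m i)) ≤ ν (PiNat.cylinder (c i) (m i)) := by
    refine le_of_eq_of_le ?_ (ENNReal.le_tsum i)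
    rw [indicator_of_mem (PiNat.self_mem_cylinder _ _)]
  rw [← PiNat.mem_cylinder_iff_eq.1 hi] at hmass
  exact hmass.not_gt (ha (m i))

theorem exists_subset_cylinder_firstDiff {S : Set (∀ n, E n)} (hS : S.Nontrivial) :
    ∃ x ∈ S, ∃ y ∈ S, x ≠ y ∧ S ⊆ PiNat.cylinder x (PiNat.firstDiff x y) := by
  have hex : ∃ n, ∃ x ∈ S, ∃ y ∈ S, x ≠ y ∧ PiNat.firstDiff x y = n := by
    obtain ⟨x, hx, y, hy, hxy⟩ := hS
    exact ⟨_, x, hx, y, hy, hxy, rfl⟩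
  obtain ⟨x, hx, y, hy, hxy, hmin⟩ := Nat.find_spec hex
  refine ⟨x, hx, y, hy, hxy, fun z hz => ?_⟩
  rcases eq_or_ne z x with rfl | hzx
  · exact PiNat.self_mem_cylinder _ _
  · rw [PiNat.mem_cylinder_iff_le_firstDiff hzx, hmin]
    exact Nat.find_min' hex ⟨z, hz, x, hx, hzx, rfl⟩

end Symbolic

section CylinderDiameter

variable {E : ℕ → Type*} {Y : Type*} [PseudoEMetricSpace Y] {F : (∀ n, E n) → Y} {C : ℝ≥0∞}

theorem exists_preimage_subset_cylinder [Nonempty (∀ n, E n)]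
    (hsep : ∀ x y, x ≠ y →
      ediam (F '' PiNat.cylinder x (PiNat.firstDiff x y)) ≤ C * edist (F x) (F y))
    (hsmall : ∀ x, Tendsto (fun n => ediam (F '' PiNat.cylinder x n)) atTop (𝓝 0))
    {s : ℝ} (hs : 0 < s) (U : Set Y) {δ : ℝ≥0∞} (hδ : 0 < δ) :
    ∃ c m, F ⁻¹' U ⊆ PiNat.cylinder c m ∧
      ediam (F '' PiNat.cylinder c m) ^ s ≤ C ^ s * ediam U ^ s + δ := by
  rcases (F ⁻¹' U).subsingleton_or_nontrivial with hU | hU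
  · obtain ⟨c, hc⟩ : ∃ c, F ⁻¹' U ⊆ {c} := by
      rcases hU.eq_empty_or_singleton with h | ⟨c, h⟩
      · exact ⟨Classical.arbitrary _, h ▸ empty_subset _⟩
      · exact ⟨c, h.subset⟩
    have hlim : Tendsto (fun n => ediam (F '' PiNat.cylinder c n) ^ s) atTop (𝓝 0) := by
      simpa [hs] using (hsmall c).ennrpow_const s
    obtain ⟨m, hm⟩ := (hlim.eventually_lt_const hδ).exists
    exact ⟨c, m, hc.trans (singleton_subset_iff.2 (PiNat.self_mem_cylinder c m)),
      hm.le.trans le_add_self⟩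
  · obtain ⟨x, hx, y, hy, hxy, hsub⟩ := exists_subset_cylinder_firstDiff hU
    refine ⟨x, _, hsub, le_add_right ?_⟩
    calc ediam (F '' PiNat.cylinder x (PiNat.firstDiff x y)) ^ s
        ≤ (C * edist (F x) (F y)) ^ s := by gcongr; exact hsep x y hxy
      _ ≤ (C * ediam U) ^ s := by gcongr; exact edist_le_ediam_of_mem hx hy
      _ = C ^ s * ediam U ^ s := ENNReal.mul_rpow_of_nonneg _ _ hs.le

theorem ediam_image_cylinder_le_pow {ε : ℝ≥0∞}
    (hshrink : ∀ a n,
      ediam (F '' PiNat.cylinder a (n + 1)) ≤ ε * ediam (F '' PiNat.cylinder a n))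
    (a : ∀ n, E n) (n : ℕ) : ediam (F '' PiNat.cylinder a n) ≤ ε ^ n * ediam (range F) := by
  induction n with
  | zero => simp
  | succ n ih =>
    calc ediam (F '' PiNat.cylinder a (n + 1)) ≤ ε * ediam (F '' PiNat.cylinder a n) := hshrink a n
      _ ≤ ε * (ε ^ n * ediam (range F)) := by gcongr
      _ = ε ^ (n + 1) * ediam (range F) := by rw [pow_succ', mul_assoc]

theorem ediam_range_ne_top {Y : Type*} [PseudoMetricSpace Y] {F : (∀ n, E n) → Y}
    (hF : (range F).Nontrivial) (hC : C ≠ ∞)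
    (hsep : ∀ x y, x ≠ y →
      ediam (F '' PiNat.cylinder x (PiNat.firstDiff x y)) ≤ C * edist (F x) (F y)) :
    ediam (range F) ≠ ∞ := by
  rw [← image_univ] at hF ⊢
  obtain ⟨x, -, y, -, hxy, hsub⟩ := exists_subset_cylinder_firstDiff (nontrivial_of_image F univ hF)
  exact ne_top_of_le_ne_top (ENNReal.mul_ne_top hC (edist_ne_top _ _))
    ((ediam_mono (image_mono hsub)).trans (hsep x y hxy))

end CylinderDiameter

section Dimension

theorem le_hausdorffMeasure_of_forall_cover {X : Type*} [EMetricSpace X] [MeasurableSpace X]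
    [BorelSpace X] {A : Set X} {s : ℝ} (hs : 0 < s) {r : ℝ≥0∞}
    (h : ∀ t : ℕ → Set X, A ⊆ ⋃ n, t n → r ≤ ∑' n, ediam (t n) ^ s) : r ≤ μH[s] A := by
  rw [Measure.hausdorffMeasure_apply]
  refine le_iSup₂_of_le 1 one_pos (le_iInf₂ fun t ht => le_iInf fun _ => (h t ht).trans ?_)
  refine ENNReal.tsum_le_tsum fun n => ?_
  rcases (t n).eq_empty_or_nonempty with hempty | hne
  · simp [hempty, hs]
  · simp [hne]

theorem rpow_le_sum_rpow {ι : Type*} [Fintype ι] {d : ℝ≥0∞} {e : ι → ℝ≥0∞} {K ε : ℝ≥0∞}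
    {s : ℝ} (hd : d ≠ ∞) (hs0 : 0 < s) (hs1 : s ≤ 1) (hshrink : ∀ i, e i ≤ ε * d)
    (hsum : d ≤ K * ∑ i, e i) (hK : K * ε ^ (1 - s) ≤ 1) : d ^ s ≤ ∑ i, e i ^ s := by
  rcases eq_or_ne d 0 with rfl | hd0
  · simp [hs0]
  have hs1' : 0 ≤ 1 - s := sub_nonneg.2 hs1
  have hsplit : ∀ x : ℝ≥0∞, x = x ^ s * x ^ (1 - s) := fun x => by
    rw [← ENNReal.rpow_add_of_nonneg _ _ hs0.le hs1', add_sub_cancel, ENNReal.rpow_one]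
  have hmul : d ^ s * d ^ (1 - s) ≤ (∑ i, e i ^ s) * d ^ (1 - s) :=
    calc d ^ s * d ^ (1 - s) ≤ K * ∑ i, e i := (hsplit d).symm.trans_le hsum
      _ = K * ∑ i, e i ^ s * e i ^ (1 - s) := by simp only [← hsplit]
      _ ≤ K * ∑ i, e i ^ s * (ε * d) ^ (1 - s) := by gcongr with i; exact hshrink i
      _ = K * ε ^ (1 - s) * ((∑ i, e i ^ s) * d ^ (1 - s)) := by
        rw [← Finset.sum_mul, ENNReal.mul_rpow_of_nonneg _ _ hs1']; ring
      _ ≤ (∑ i, e i ^ s) * d ^ (1 - s) := mul_le_of_le_one_left zero_le hK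
  exact (ENNReal.mul_le_mul_iff_left (ENNReal.rpow_pos hd0.bot_lt hd).ne'
    (ENNReal.rpow_ne_top_of_nonneg hs1' hd)).1 hmul

variable {E : ℕ → Type*} {Y : Type*} [EMetricSpace Y] {F : (∀ n, E n) → Y} {C : ℝ≥0∞} {s : ℝ}

theorem ediam_range_rpow_div_le_hausdorffMeasure [Nonempty (∀ n, E n)] [∀ n, Fintype (E n)]
    [MeasurableSpace Y] [BorelSpace Y]
    (hsep : ∀ x y, x ≠ y →
      ediam (F '' PiNat.cylinder x (PiNat.firstDiff x y)) ≤ C * edist (F x) (F y))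
    (hsmall : ∀ x, Tendsto (fun n => ediam (F '' PiNat.cylinder x n)) atTop (𝓝 0))
    (hs : 0 < s)
    (hsub : ∀ a n, ediam (F '' PiNat.cylinder a n) ^ s ≤
      ∑ j, ediam (F '' PiNat.cylinder (update a n j) (n + 1)) ^ s) :
    ediam (range F) ^ s / C ^ s ≤ μH[s] (range F) := by
  refine le_hausdorffMeasure_of_forall_cover hs fun t ht => ENNReal.div_le_of_le_mul' ?_
  refine ENNReal.le_of_forall_pos_le_add fun ε hε _ => ?_
  obtain ⟨δ, hδ, hδε⟩ := ENNReal.exists_pos_sum_of_countable' (ENNReal.coe_pos.2 hε).ne' ℕ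
  choose c m hcm hle using fun n => exists_preimage_subset_cylinder hsep hsmall hs (t n) (hδ n)
  have hcover : ∀ a, ∃ i, a ∈ PiNat.cylinder (c i) (m i) := fun a =>
    (mem_iUnion.1 (ht ⟨a, rfl⟩)).imp fun i hi => hcm i hi
  calc ediam (range F) ^ s
      ≤ ∑' n, ediam (F '' PiNat.cylinder (c n) (m n)) ^ s := by
        simpa only [image_univ] using
          le_tsum_of_le_sum_cylinder_update (h := fun U => ediam (F '' U) ^ s) hsub hcover
    _ ≤ ∑' n, (C ^ s * ediam (t n) ^ s + δ n) := ENNReal.tsum_le_tsum hle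
    _ = C ^ s * ∑' n, ediam (t n) ^ s + ∑' n, δ n := by
        rw [ENNReal.tsum_add, ENNReal.tsum_mul_left]
    _ ≤ C ^ s * ∑' n, ediam (t n) ^ s + ε := by gcongr

theorem le_dimH_range_of_ediam_cylinder {Y : Type*} [MetricSpace Y] [∀ n, Fintype (E n)]
    {F : (∀ n, E n) → Y} {s : ℝ≥0} {ε K : ℝ≥0∞} (hF : (range F).Nontrivial)
    (hs0 : 0 < s) (hs1 : s ≤ 1) (hC : C ≠ ∞) (hε : ε < 1) (hK : K * ε ^ (1 - s : ℝ) ≤ 1)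
    (hsep : ∀ x y, x ≠ y →
      ediam (F '' PiNat.cylinder x (PiNat.firstDiff x y)) ≤ C * edist (F x) (F y))
    (hshrink : ∀ a n,
      ediam (F '' PiNat.cylinder a (n + 1)) ≤ ε * ediam (F '' PiNat.cylinder a n))
    (hsum : ∀ a n, ediam (F '' PiNat.cylinder a n) ≤
      K * ∑ j, ediam (F '' PiNat.cylinder (update a n j) (n + 1))) :
    s ≤ dimH (range F) := by
  borelize Y
  have : Nonempty (∀ n, E n) := range_nonempty_iff_nonempty.1 hF.nonempty
  have hfin : ediam (range F) ≠ ∞ := ediam_range_ne_top hF hC hsep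
  have hsmall : ∀ a, Tendsto (fun n => ediam (F '' PiNat.cylinder a n)) atTop (𝓝 0) := by
    intro a
    have hgeom : Tendsto (fun n => ε ^ n * ediam (range F)) atTop (𝓝 0) := by
      simpa using ENNReal.Tendsto.mul_const
        (ENNReal.tendsto_pow_atTop_nhds_zero_of_lt_one hε) (Or.inr hfin)
    exact tendsto_of_tendsto_of_tendsto_of_le_of_le tendsto_const_nhds hgeom
      (fun _ => zero_le) (ediam_image_cylinder_le_pow hshrink a)
  have hsub : ∀ a n, ediam (F '' PiNat.cylinder a n) ^ (s : ℝ) ≤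
      ∑ j, ediam (F '' PiNat.cylinder (update a n j) (n + 1)) ^ (s : ℝ) := by
    intro a n
    refine rpow_le_sum_rpow (ne_top_of_le_ne_top hfin (ediam_mono (image_subset_range _ _)))
      (by exact_mod_cast hs0) (by exact_mod_cast hs1) (fun j => ?_) (hsum a n) hK
    rw [← PiNat.mem_cylinder_iff_eq.1 (PiNat.update_mem_cylinder a n j)]
    exact hshrink (update a n j) n
  have hpos : 0 < ediam (range F) ^ (s : ℝ) / C ^ (s : ℝ) :=
    ENNReal.div_pos (ENNReal.rpow_pos (ediam_pos_iff.2 hF) hfin).ne'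
      (ENNReal.rpow_ne_top_of_nonneg s.2 hC)
  exact le_dimH_of_hausdorffMeasure_ne_zero (hpos.trans_le
    (ediam_range_rpow_div_le_hausdorffMeasure hsep hsmall (by exact_mod_cast hs0) hsub)).ne'

theorem dimH_range_le_of_edist_cylinder_le {α : Type*} [Fintype α] {F : (ℕ → α) → Y} {r : ℝ≥0∞}
    {t : ℝ≥0} (hC : C ≠ ∞) (hr : r < 1)
    (hF : ∀ a n, ∀ b ∈ PiNat.cylinder a n, edist (F a) (F b) ≤ C * r ^ n)
    (ht : Fintype.card α * r ^ (t : ℝ) ≤ 1) : dimH (range F) ≤ t := by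
  borelize Y
  let cell : (n : ℕ) → (Fin n → α) → Set Y := fun n w => F '' {a | ∀ i : Fin n, a i = w i}
  have hcell : ∀ n w, ediam (cell n w) ≤ C * r ^ n := by
    intro n w
    refine ediam_le ?_
    rintro _ ⟨a, ha, rfl⟩ _ ⟨b, hb, rfl⟩
    exact hF a n b fun i hi => (hb ⟨i, hi⟩).trans (ha ⟨i, hi⟩).symm
  have hsum : ∀ n, ∑ w, ediam (cell n w) ^ (t : ℝ) ≤ C ^ (t : ℝ) := by
    intro n
    calc ∑ w, ediam (cell n w) ^ (t : ℝ)
        ≤ ∑ _w : Fin n → α, (C * r ^ n) ^ (t : ℝ) := by gcongr with w; exact hcell n w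
      _ = C ^ (t : ℝ) * (Fintype.card α * r ^ (t : ℝ)) ^ n := by
          rw [Finset.sum_const, Finset.card_univ, Fintype.card_fun, Fintype.card_fin, nsmul_eq_mul,
            ENNReal.mul_rpow_of_nonneg _ _ t.coe_nonneg, ← ENNReal.rpow_natCast_mul,
            mul_comm (n : ℝ), ENNReal.rpow_mul_natCast, mul_pow]
          push_cast
          ring
      _ ≤ C ^ (t : ℝ) := mul_le_of_le_one_right zero_le (pow_le_one₀ zero_le ht)
  have hlim : Tendsto (fun n => C * r ^ n) atTop (𝓝 0) := by
    simpa using ENNReal.Tendsto.const_mul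
      (ENNReal.tendsto_pow_atTop_nhds_zero_of_lt_one hr) (Or.inr hC)
  have hcover : ∀ n, range F ⊆ ⋃ w, cell n w := by
    rintro n _ ⟨a, rfl⟩
    exact mem_iUnion.2 ⟨fun i => a i, a, fun _ => rfl, rfl⟩
  have hmeas : μH[t] (range F) ≤ C ^ (t : ℝ) :=
    (Measure.hausdorffMeasure_le_liminf_sum t (range F) _ hlim cell (.of_forall hcell)
      (.of_forall hcover)).trans (liminf_le_of_frequently_le' (.of_forall hsum))
  exact dimH_le_of_hausdorffMeasure_ne_top
    (ne_top_of_le_ne_top (ENNReal.rpow_ne_top_of_nonneg t.2 hC) hmeas)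

end Dimension

section Chain

theorem edist_zero_le_sum_edist_succ {Y : Type*} [PseudoEMetricSpace Y] {k : ℕ}
    (p : Fin (k + 1) → Y) (j : Fin (k + 1)) :
    edist (p 0) (p j) ≤ ∑ i : Fin k, edist (p i.castSucc) (p i.succ) := by
  induction k with
  | zero => simp [Fin.fin_one_eq_zero j]
  | succ k ih =>
    rw [Fin.sum_univ_succ]
    cases j using Fin.cases with
    | zero => simp
    | succ j =>
      exact (edist_triangle _ (p (Fin.succ 0)) _).trans
        (add_le_add_right (ih (fun i => p i.succ) j) _)

theorem ediam_iUnion_le_of_chain {Y : Type*} [PseudoEMetricSpace Y] {k : ℕ}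
    {S : Fin (k + 1) → Set Y} {p : Fin (k + 1) → Y} {H : ℝ≥0∞} (hp : ∀ i, p i ∈ S i)
    (hchain : ∀ i : Fin k, edist (p i.castSucc) (p i.succ) ≤ H * ediam (S i.castSucc)) :
    ediam (⋃ i, S i) ≤ 2 * (H + 1) * ∑ i, ediam (S i) := by
  have hp0 : ∀ j, edist (p 0) (p j) ≤ H * ∑ i, ediam (S i) := fun j =>
    calc edist (p 0) (p j) ≤ ∑ i : Fin k, edist (p i.castSucc) (p i.succ) :=
          edist_zero_le_sum_edist_succ p j
      _ ≤ H * ∑ i : Fin k, ediam (S i.castSucc) := by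
          rw [Finset.mul_sum]; gcongr with i; exact hchain i
      _ ≤ H * ∑ i, ediam (S i) := by
          gcongr; rw [Fin.sum_univ_castSucc]; exact le_self_add
  have hball : ∀ u ∈ ⋃ i, S i, edist (p 0) u ≤ (H + 1) * ∑ i, ediam (S i) := by
    intro u hu
    obtain ⟨j, hj⟩ := mem_iUnion.1 hu
    calc edist (p 0) u ≤ edist (p 0) (p j) + edist (p j) u := edist_triangle _ _ _
      _ ≤ H * ∑ i, ediam (S i) + ∑ i, ediam (S i) :=
          add_le_add (hp0 j) ((edist_le_ediam_of_mem (hp j) hj).trans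
            (Finset.single_le_sum_of_canonicallyOrdered (f := fun i => ediam (S i))
              (Finset.mem_univ j)))
      _ = (H + 1) * ∑ i, ediam (S i) := by ring
  refine ediam_le fun u hu v hv => ?_
  calc edist u v ≤ edist (p 0) u + edist (p 0) v := edist_triangle_left _ _ _
    _ ≤ (H + 1) * ∑ i, ediam (S i) + (H + 1) * ∑ i, ediam (S i) :=
        add_le_add (hball u hu) (hball v hv)
    _ = 2 * (H + 1) * ∑ i, ediam (S i) := by ring

end Chain

section CantorSet

/-- The `c`-th even digit in base `2 * k + 1`. -/
def evenDigit (k : ℕ) (c : Fin (k + 1)) : Fin (2 * k + 1) := ⟨2 * c, by lia⟩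

/-- The point of `[0, 1]` whose base `2 * k + 1` digits are `2 * a 0, 2 * a 1, …`; its range is the
Cantor set of numbers with an expansion in even digits only. -/
noncomputable def cantorCode (k : ℕ) (a : ℕ → Fin (k + 1)) : ℝ :=
  Real.ofDigits fun n => evenDigit k (a n)

variable {k n : ℕ} {a b : ℕ → Fin (k + 1)}

theorem cantorCode_mem_Icc (k : ℕ) (a : ℕ → Fin (k + 1)) : cantorCode k a ∈ Icc (0 : ℝ) 1 :=
  ⟨Real.ofDigits_nonneg _, Real.ofDigits_le_one _⟩

theorem continuous_cantorCode (k : ℕ) : Continuous (cantorCode k) :=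
  Real.continuous_ofDigits.comp <| continuous_pi fun n =>
    (continuous_of_discreteTopology (f := evenDigit k)).comp (continuous_apply n)

theorem cantorCode_sub_of_mem_cylinder (h : b ∈ PiNat.cylinder a n) :
    cantorCode k a - cantorCode k b = (2 * k + 1 : ℝ)⁻¹ ^ (n + 1) *
      (2 * ((a n : ℝ) - b n) +
        (cantorCode k (fun i => a (i + (n + 1))) - cantorCode k (fun i => b (i + (n + 1))))) := by
  have hsum : ∑ i ∈ Finset.range n, Real.ofDigitsTerm (fun i => evenDigit k (a i)) i =
      ∑ i ∈ Finset.range n, Real.ofDigitsTerm (fun i => evenDigit k (b i)) i := by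
    refine Finset.sum_congr rfl fun i hi => ?_
    simp only [Real.ofDigitsTerm, h i (Finset.mem_range.1 hi)]
  unfold cantorCode
  rw [Real.ofDigits_eq_sum_add_ofDigits (fun i => evenDigit k (a i)) (n + 1),
    Real.ofDigits_eq_sum_add_ofDigits (fun i => evenDigit k (b i)) (n + 1),
    Finset.sum_range_succ, Finset.sum_range_succ, hsum]
  simp only [Real.ofDigitsTerm, evenDigit]
  push_cast
  rw [inv_pow]
  ring

theorem dist_cantorCode_le (h : b ∈ PiNat.cylinder a n) :
    dist (cantorCode k a) (cantorCode k b) ≤ (2 * k + 1 : ℝ)⁻¹ ^ n := by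
  rw [Real.dist_eq]
  refine (Real.abs_ofDigits_sub_ofDigits_le (n := n) fun i hi => ?_).trans_eq (by push_cast; simp)
  rw [h i hi]

theorem pow_firstDiff_succ_le_dist_cantorCode (hab : a ≠ b) :
    (2 * k + 1 : ℝ)⁻¹ ^ (PiNat.firstDiff a b + 1) ≤ dist (cantorCode k a) (cantorCode k b) := by
  rw [Real.dist_eq, cantorCode_sub_of_mem_cylinder
    (PiNat.mem_cylinder_comm _ _ _ |>.1 (PiNat.mem_cylinder_firstDiff a b)), abs_mul,
    abs_of_pos (by positivity)]
  refine le_mul_of_one_le_right (by positivity) ?_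
  set n := PiNat.firstDiff a b
  obtain ⟨ha0, ha1⟩ := cantorCode_mem_Icc k fun i => a (i + (n + 1))
  obtain ⟨hb0, hb1⟩ := cantorCode_mem_Icc k fun i => b (i + (n + 1))
  rcases lt_or_gt_of_ne (PiNat.apply_firstDiff_ne hab) with hlt | hlt
  · have : (a n : ℝ) + 1 ≤ b n := by exact_mod_cast hlt
    exact le_abs.2 (Or.inr (by linarith))
  · have : (b n : ℝ) + 1 ≤ a n := by exact_mod_cast hlt
    exact le_abs.2 (Or.inl (by linarith))

theorem cantorCode_injective (k : ℕ) : Injective (cantorCode k) := by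
  intro a b hab
  by_contra hne
  have hpos : 0 < dist (cantorCode k a) (cantorCode k b) :=
    lt_of_lt_of_le (by positivity) (pow_firstDiff_succ_le_dist_cantorCode hne)
  exact hpos.ne' (dist_eq_zero.2 hab)

theorem dist_cantorCode_update (a : ℕ → Fin (k + 1)) (n : ℕ) (i j : Fin (k + 1)) :
    dist (cantorCode k (update a n i)) (cantorCode k (update a n j)) =
      (2 * k + 1 : ℝ)⁻¹ ^ (n + 1) * (2 * |(i : ℝ) - j|) := by
  have htail : ∀ i, (fun m => update a n i (m + (n + 1))) = fun m => a (m + (n + 1)) := fun i =>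
     funext fun m => update_of_ne (by lia) _ _
  have hmem : update a n j ∈ PiNat.cylinder (update a n i) n := fun m hm => by
    rw [update_of_ne hm.ne, update_of_ne hm.ne]
  rw [Real.dist_eq, cantorCode_sub_of_mem_cylinder hmem, htail, htail, update_self, update_self,
    sub_self, add_zero, abs_mul, abs_mul, abs_two, abs_of_pos (by positivity)]

theorem exists_mem_cylinder_le_dist_cantorCode (a : ℕ → Fin (k + 1)) (n : ℕ) :
    ∃ b ∈ PiNat.cylinder a n,
      (2 * k + 1 : ℝ)⁻¹ ^ (n + 1) * k ≤ dist (cantorCode k a) (cantorCode k b) := by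
  obtain ⟨j, hj⟩ : ∃ j : Fin (k + 1), (k : ℝ) ≤ 2 * |(a n : ℝ) - j| := by
    rcases le_total (2 * (a n : ℝ)) k with h | h
    · refine ⟨Fin.last k, ?_⟩
      rw [abs_sub_comm, Fin.val_last]
      linarith [le_abs_self ((k : ℝ) - a n)]
    · exact ⟨0, by simpa using h⟩
  have hdist := dist_cantorCode_update a n (a n) j
  rw [update_eq_self] at hdist
  refine ⟨update a n j, PiNat.update_mem_cylinder a n j, ?_⟩
  rw [hdist]
  gcongr

theorem dimH_range_cantorCode_lt_one (hk : 0 < k) : dimH (range (cantorCode k)) < 1 := by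
  have hk' : (0 : ℝ) < k := by exact_mod_cast hk
  have hbase : (1 : ℝ) < 2 * k + 1 := by linarith
  set r : ℝ := (2 * k + 1 : ℝ)⁻¹ with hr
  have hr0 : 0 < r := by positivity
  set t : ℝ := Real.logb (2 * k + 1) (k + 1)
  have ht0 : 0 ≤ t := Real.logb_nonneg hbase (by simp)
  have ht1 : t < 1 := by
    rw [Real.logb_lt_iff_lt_rpow hbase (by positivity), Real.rpow_one]
    linarith
  have hrt : (k + 1 : ℝ) * r ^ t = 1 := by
    rw [hr, Real.inv_rpow (by positivity), Real.rpow_logb (by positivity) hbase.ne' (by positivity),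
      mul_inv_cancel₀ (by positivity)]
  have hdim : dimH (range (cantorCode k)) ≤ t.toNNReal := by
    refine dimH_range_le_of_edist_cylinder_le (r := ENNReal.ofReal r) ENNReal.one_ne_top
      (ENNReal.ofReal_lt_one.2 (inv_lt_one_of_one_lt₀ hbase)) (fun a n b hb => ?_) ?_
    · rw [one_mul, edist_dist, ← ENNReal.ofReal_pow hr0.le]
      exact ENNReal.ofReal_le_ofReal (dist_cantorCode_le hb)
    · rw [Real.coe_toNNReal t ht0, ENNReal.ofReal_rpow_of_pos hr0, Fintype.card_fin,
        ← ENNReal.ofReal_natCast, ← ENNReal.ofReal_mul (by positivity), Nat.cast_succ, hrt,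
        ENNReal.ofReal_one]
  exact hdim.trans_lt (ENNReal.ofReal_lt_one.2 ht1)

end CantorSet

section Quasisymmetry

/-- A quasisymmetry inequality at a single ratio: on `E`, the map `f` turns a ratio of distances
from a common point of at most `t` into a ratio of at most `H`. -/
def IsWeakQSOn {X Y : Type*} [MetricSpace X] [MetricSpace Y] (t H : ℝ) (f : X → Y)
    (E : Set X) : Prop :=
  ∀ x ∈ E, ∀ y ∈ E, ∀ z ∈ E, dist x y ≤ t * dist x z → dist (f x) (f y) ≤ H * dist (f x) (f z)

theorem IsQSOn.isWeakQSOn {X Y : Type*} [MetricSpace X] [MetricSpace Y] {η : ℝ → ℝ} {f : X → Y}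
    {E : Set X} {t : ℝ} (hf : IsQSOn η f E) (hη : MonotoneOn η (Ici 0)) (ht : 0 ≤ t) :
    IsWeakQSOn t (η t) f E := by
  intro x hx y hy z hz hxyz
  rcases eq_or_ne x z with rfl | hxz
  · obtain rfl : x = y := by simpa using hxyz
    simp
  · have hratio : dist x y / dist x z ≤ t := (div_le_iff₀ (dist_pos.2 hxz)).2 hxyz
    refine (hf.2 x hx y hy z hz hxz).trans ?_
    gcongr
    exact hη (mem_Ici.2 (by positivity)) ht hratio

variable {k : ℕ} {Y : Type*} [MetricSpace Y] {f : ℝ → Y} {t H : ℝ}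

theorem IsWeakQSOn.edist_comp_cantorCode_le (hf : IsWeakQSOn t H f (range (cantorCode k)))
    {a b c : ℕ → Fin (k + 1)}
    (h : dist (cantorCode k a) (cantorCode k b) ≤ t * dist (cantorCode k a) (cantorCode k c)) :
    edist ((f ∘ cantorCode k) a) ((f ∘ cantorCode k) b) ≤
      ENNReal.ofReal H * edist ((f ∘ cantorCode k) a) ((f ∘ cantorCode k) c) := by
  rw [edist_dist, edist_dist, ← ENNReal.ofReal_mul' dist_nonneg]
  exact ENNReal.ofReal_le_ofReal (hf _ ⟨a, rfl⟩ _ ⟨b, rfl⟩ _ ⟨c, rfl⟩ h)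

theorem IsWeakQSOn.ediam_cylinder_succ_le (hf : IsWeakQSOn (1 / k) H f (range (cantorCode k)))
    (hk : 0 < k) (a : ℕ → Fin (k + 1)) (n : ℕ) :
    ediam ((f ∘ cantorCode k) '' PiNat.cylinder a (n + 1)) ≤
      ENNReal.ofReal H * ediam ((f ∘ cantorCode k) '' PiNat.cylinder a n) := by
  have hk' : (0 : ℝ) < k := by exact_mod_cast hk
  refine ediam_le ?_
  rintro _ ⟨x, hx, rfl⟩ _ ⟨y, hy, rfl⟩
  have hxn : x ∈ PiNat.cylinder a n := PiNat.cylinder_anti a n.le_succ hx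
  obtain ⟨z, hz, hxz⟩ := exists_mem_cylinder_le_dist_cantorCode x n
  rw [PiNat.mem_cylinder_iff_eq.1 hxn] at hz
  rw [← PiNat.mem_cylinder_iff_eq.1 hx] at hy
  have hxyz : dist (cantorCode k x) (cantorCode k y) ≤
      1 / k * dist (cantorCode k x) (cantorCode k z) := by
    rw [one_div, ← div_eq_inv_mul, le_div_iff₀ hk']
    exact (mul_le_mul_of_nonneg_right (dist_cantorCode_le hy) hk'.le).trans hxz
  refine (hf.edist_comp_cantorCode_le hxyz).trans ?_
  gcongr
  exact edist_le_ediam_of_mem (mem_image_of_mem _ hxn) (mem_image_of_mem _ hz)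

theorem IsWeakQSOn.ediam_cylinder_le_sum (hf : IsWeakQSOn 6 H f (range (cantorCode k)))
    (hk : 0 < k) (a : ℕ → Fin (k + 1)) (n : ℕ) :
    ediam ((f ∘ cantorCode k) '' PiNat.cylinder a n) ≤ 2 * (ENNReal.ofReal H + 1) *
      ∑ j, ediam ((f ∘ cantorCode k) '' PiNat.cylinder (update a n j) (n + 1)) := by
  rw [← PiNat.iUnion_cylinder_update a n, image_iUnion]
  refine ediam_iUnion_le_of_chain (p := fun j => (f ∘ cantorCode k) (update a n j))
    (fun j => mem_image_of_mem _ (PiNat.self_mem_cylinder _ _)) fun i => ?_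
  set r : ℝ := (2 * k + 1 : ℝ)⁻¹ with hr
  have hk' : (1 : ℝ) ≤ k := by exact_mod_cast hk
  obtain ⟨z, hz, hdist⟩ :=
    exists_mem_cylinder_le_dist_cantorCode (update a n i.castSucc) (n + 1)
  have hchain :=
    calc dist (cantorCode k (update a n i.castSucc)) (cantorCode k (update a n i.succ))
        = r ^ (n + 1) * 2 := by rw [dist_cantorCode_update]; simp [hr]
      _ = r ^ (n + 1 + 1) * (2 * (2 * k + 1)) := by rw [pow_succ r (n + 1), hr]; field_simp
      _ ≤ r ^ (n + 1 + 1) * (6 * k) := mul_le_mul_of_nonneg_left (by linarith) (by positivity)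
      _ = 6 * (r ^ (n + 1 + 1) * k) := by ring
      _ ≤ 6 * dist (cantorCode k (update a n i.castSucc)) (cantorCode k z) := by gcongr
  refine (hf.edist_comp_cantorCode_le hchain).trans ?_
  gcongr
  exact edist_le_ediam_of_mem (mem_image_of_mem _ (PiNat.self_mem_cylinder _ _))
    (mem_image_of_mem _ hz)

theorem IsWeakQSOn.ediam_cylinder_firstDiff_le
    (hf : IsWeakQSOn (2 * k + 1) H f (range (cantorCode k))) {x y : ℕ → Fin (k + 1)}
    (hxy : x ≠ y) :
    ediam ((f ∘ cantorCode k) '' PiNat.cylinder x (PiNat.firstDiff x y)) ≤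
      2 * ENNReal.ofReal H * edist ((f ∘ cantorCode k) x) ((f ∘ cantorCode k) y) := by
  have hball : ∀ z ∈ PiNat.cylinder x (PiNat.firstDiff x y),
      edist ((f ∘ cantorCode k) x) ((f ∘ cantorCode k) z) ≤
        ENNReal.ofReal H * edist ((f ∘ cantorCode k) x) ((f ∘ cantorCode k) y) := by
    intro z hz
    refine hf.edist_comp_cantorCode_le ?_
    have hpos : (0 : ℝ) < 2 * k + 1 := by positivity
    calc dist (cantorCode k x) (cantorCode k z)
        ≤ (2 * k + 1 : ℝ)⁻¹ ^ PiNat.firstDiff x y := dist_cantorCode_le hz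
      _ = (2 * k + 1) * (2 * k + 1 : ℝ)⁻¹ ^ (PiNat.firstDiff x y + 1) := by
          rw [pow_succ', mul_inv_cancel_left₀ hpos.ne']
      _ ≤ (2 * k + 1) * dist (cantorCode k x) (cantorCode k y) := by
          gcongr; exact pow_firstDiff_succ_le_dist_cantorCode hxy
  refine ediam_le ?_
  rintro _ ⟨u, hu, rfl⟩ _ ⟨v, hv, rfl⟩
  refine (edist_triangle_left _ _ _).trans ((add_le_add (hball u hu) (hball v hv)).trans_eq ?_)
  ring

theorem le_dimH_image_range_cantorCode {s : ℝ≥0} {ε L : ℝ} (hk : 0 < k) (hs0 : 0 < s) (hs1 : s ≤ 1)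
    (hf : InjOn f (range (cantorCode k))) (hfε : IsWeakQSOn (1 / k) ε f (range (cantorCode k)))
    (hfH : IsWeakQSOn 6 H f (range (cantorCode k)))
    (hfL : IsWeakQSOn (2 * k + 1) L f (range (cantorCode k))) (hε : ENNReal.ofReal ε < 1)
    (hεH : 2 * (ENNReal.ofReal H + 1) * ENNReal.ofReal ε ^ (1 - s : ℝ) ≤ 1) :
    s ≤ dimH (f '' range (cantorCode k)) := by
  have : Nontrivial (Fin (k + 1)) := Fin.nontrivial_iff_two_le.2 (by lia)
  have hinj : Injective (f ∘ cantorCode k) :=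
    (hf.injective_iff _ Subset.rfl).2 (cantorCode_injective k)
  have hnontriv : (range (f ∘ cantorCode k)).Nontrivial := by
    simpa only [image_univ] using nontrivial_univ.image hinj
  rw [← range_comp]
  exact le_dimH_range_of_ediam_cylinder hnontriv hs0 hs1
    (ENNReal.mul_ne_top ENNReal.ofNat_ne_top ENNReal.ofReal_ne_top) hε hεH
    (fun _ _ => hfL.ediam_cylinder_firstDiff_le) (hfε.ediam_cylinder_succ_le hk)
    (hfH.ediam_cylinder_le_sum hk)

end Quasisymmetry

section Distortion

variable {η : ℝ → ℝ}

theorem IsDistortion.tendsto_nhdsGT_zero (hη : IsDistortion η) :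
    Tendsto η (𝓝[>] 0) (𝓝 0) := by
  have h := hη.1 0 self_mem_Ici
  rw [ContinuousWithinAt, hη.2.2.1] at h
  exact h.mono_left (nhdsWithin_mono _ Ioi_subset_Ici_self)

theorem exists_nat_ofReal_one_div_lt_one_and_mul_rpow_le_one (hη : Tendsto η (𝓝[>] 0) (𝓝 0))
    {K : ℝ≥0∞} (hK : K ≠ ∞) {p : ℝ} (hp : 0 < p) :
    ∃ k : ℕ, 0 < k ∧ ENNReal.ofReal (η (1 / k)) < 1 ∧
      K * ENNReal.ofReal (η (1 / k)) ^ p ≤ 1 := by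
  have hinv : Tendsto (fun k : ℕ => 1 / (k : ℝ)) atTop (𝓝[>] 0) :=
    tendsto_nhdsWithin_iff.2 ⟨tendsto_one_div_atTop_nhds_zero_nat,
      (eventually_gt_atTop 0).mono fun k hk => mem_Ioi.2 (by positivity)⟩
  have hlim : Tendsto (fun k : ℕ => ENNReal.ofReal (η (1 / k))) atTop (𝓝 0) := by
    simpa using ENNReal.tendsto_ofReal (hη.comp hinv)
  have hlimK : Tendsto (fun k : ℕ => K * ENNReal.ofReal (η (1 / k)) ^ p) atTop (𝓝 0) := by
    simpa [hp] using ENNReal.Tendsto.const_mul (hlim.ennrpow_const p) (Or.inr hK)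
  exact ((eventually_gt_atTop 0).and ((hlim.eventually_lt_const one_pos).and
    (hlimK.eventually_le_const one_pos))).exists

end Distortion

theorem exists_compact_dimH_lt_one_image_ge_general.{u} {η : ℝ → ℝ} (hmono : MonotoneOn η (Ici 0))
    (hzero : Tendsto η (𝓝[>] 0) (𝓝 0)) {s : ℝ} (hs0 : 0 < s) (hs1 : s < 1) :
    ∃ E : Set ℝ, IsCompact E ∧ E ⊆ Icc 0 1 ∧ dimH E < 1 ∧
      ∀ (Y : Type u) [MetricSpace Y] (f : ℝ → Y), IsQSOn η f E →
        ENNReal.ofReal s ≤ dimH (f '' E) := by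
  lift s to ℝ≥0 using hs0.le
  have hK : 2 * (ENNReal.ofReal (η 6) + 1) ≠ ∞ := by finiteness
  obtain ⟨k, hk, hε, hεK⟩ :=
    exists_nat_ofReal_one_div_lt_one_and_mul_rpow_le_one hzero hK (sub_pos.2 hs1)
  refine ⟨range (cantorCode k), isCompact_range (continuous_cantorCode k),
    range_subset_iff.2 (cantorCode_mem_Icc k), dimH_range_cantorCode_lt_one hk, fun Y _ f hf => ?_⟩
  rw [ENNReal.ofReal_coe_nnreal]
  exact le_dimH_image_range_cantorCode hk (by exact_mod_cast hs0) (by exact_mod_cast hs1.le) hf.1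
    (hf.isWeakQSOn hmono (by positivity)) (hf.isWeakQSOn hmono (by positivity))
    (hf.isWeakQSOn hmono (by positivity)) hε hεK

/-- For every distortion function `η` and every `0 < s < 1` there is a compact
set `E ⊆ [0,1]` with `dimH E < 1` such that every `η`-quasisymmetry `f : E → Y` satisfies
`dimH (f '' E) ≥ s`. -/
theorem exists_compact_dimH_lt_one_image_ge
    (η : ℝ → ℝ) (hη : IsDistortion η) (s : ℝ) (hs0 : 0 < s) (hs1 : s < 1) :
    ∃ E : Set ℝ, IsCompact E ∧ E ⊆ Set.Icc 0 1 ∧ dimH E < 1 ∧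
      ∀ (Y : Type) [MetricSpace Y] (f : ℝ → Y), IsQSOn η f E →
        ENNReal.ofReal s ≤ dimH (f '' E) :=
  exists_compact_dimH_lt_one_image_ge_general hη.2.1.monotoneOn hη.tendsto_nhdsGT_zero hs0 hs1
end

section
/- For an integer N ≥ 2 define g_N : [0,1] → ℝ by g_N(s) = 1 − (1−s)^N − N·s·(1−s)^{N−1} + N^{−5}. If (N_k)_{k=1}^{n} is a nondecreasing finite sequence of integers with N_1 ≥ 2, then for every 1 ≤ k ≤ n one has (g_{N_k} ∘ g_{N_{k+1}} ∘ ⋯ ∘ g_{N_n})(0) ≤ 4·N_k^{−5}; in particular (g_{N_1} ∘ g_{N_2} ∘ ⋯ ∘ g_{N_n})(0) ≤ 1/8 for every n. -/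
open Set Metric MeasureTheory ProbabilityTheory Filter
open scoped ENNReal NNReal Classical

/-!
`g_N(s) - N⁻⁵` is the probability that a binomial variable with parameters `N` and `s` is at
least `2`. It is therefore nonnegative, and it is at most `(N s)²`. For `s ≤ 4 N⁻⁵` this square is
at most `16 N⁻³ N⁻⁵ ≤ 2 N⁻⁵`, so `g_N` maps `[0, 4 N⁻⁵]` into itself. These intervals shrink as `N`
grows, so an orbit started at `0`, with the maps applied in order of nonincreasing `N`, always lies
in the interval of the map applied last.
-/

section BernoulliBounds

variable {s : ℝ}

theorem one_sub_pow_mul_one_add_mul_le_one (hs : s ≤ 1) (n : ℕ) :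
    (1 - s) ^ n * (1 + n * s) ≤ 1 := by
  induction n with
  | zero => simp
  | succ n ih =>
    have hpow : 0 ≤ (1 - s) ^ n := pow_nonneg (sub_nonneg.mpr hs) n
    calc (1 - s) ^ (n + 1) * (1 + (n + 1 : ℕ) * s)
        = (1 - s) ^ n * (1 + n * s) - (1 - s) ^ n * ((n + 1) * s ^ 2) := by push_cast; ring
      _ ≤ (1 - s) ^ n * (1 + n * s) := sub_le_self _ (mul_nonneg hpow (by positivity))
      _ ≤ 1 := ih

theorem one_sub_sq_le_one_sub_pow_mul_one_add_mul {n : ℕ} (hns : 0 ≤ 1 + n * s) (hs : s ≤ 2) :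
    1 - (n * s) ^ 2 ≤ (1 - s) ^ n * (1 + n * s) := by
  have bernoulli : 1 - n * s ≤ (1 - s) ^ n := by
    simpa [sub_eq_add_neg] using one_add_mul_le_pow (a := -s) (by linarith) n
  calc 1 - (n * s) ^ 2 = (1 - n * s) * (1 + n * s) := by ring
    _ ≤ (1 - s) ^ n * (1 + n * s) := mul_le_mul_of_nonneg_right bernoulli hns

end BernoulliBounds

-- The term `0⁻⁵` takes the junk value `0`.
theorem gFun_zero (s : ℝ) : gFun 0 s = 0 := by
  simp [gFun]

theorem gFun_succ (n : ℕ) (s : ℝ) :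
    gFun (n + 1) s = 1 - (1 - s) ^ n * (1 + n * s) + (((n + 1 : ℕ) : ℝ) ^ 5)⁻¹ := by
  rw [gFun, Nat.add_sub_cancel]
  push_cast
  ring

theorem inv_pow_five_le_gFun (N : ℕ) {s : ℝ} (hs : s ≤ 1) : ((N : ℝ) ^ 5)⁻¹ ≤ gFun N s := by
  cases N with
  | zero => simp [gFun_zero]
  | succ n =>
    rw [gFun_succ]
    linarith [one_sub_pow_mul_one_add_mul_le_one hs n]

theorem gFun_le_sq_add_inv_pow_five (N : ℕ) {s : ℝ} (hs₀ : 0 ≤ s) (hs₂ : s ≤ 2) :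
    gFun N s ≤ (N * s) ^ 2 + ((N : ℝ) ^ 5)⁻¹ := by
  cases N with
  | zero => simp [gFun_zero]
  | succ n =>
    have hsq : (n * s) ^ 2 ≤ ((n + 1 : ℕ) * s) ^ 2 := by
      gcongr
      exact n.le_succ
    rw [gFun_succ]
    linarith [one_sub_sq_le_one_sub_pow_mul_one_add_mul (n := n) (by positivity) hs₂]

section InvariantInterval

variable {N : ℕ}

theorem four_mul_inv_pow_five_le_one_eighth (hN : 2 ≤ N) : 4 * ((N : ℝ) ^ 5)⁻¹ ≤ 1 / 8 := by
  have hN' : (2 : ℝ) ≤ N := by exact_mod_cast hN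
  calc 4 * ((N : ℝ) ^ 5)⁻¹ ≤ 4 * ((2 : ℝ) ^ 5)⁻¹ := by gcongr
    _ = 1 / 8 := by norm_num

theorem mul_four_mul_inv_pow_five_sq_le (hN : 2 ≤ N) :
    (N * (4 * ((N : ℝ) ^ 5)⁻¹)) ^ 2 ≤ 2 * ((N : ℝ) ^ 5)⁻¹ := by
  have hN' : (2 : ℝ) ≤ N := by exact_mod_cast hN
  calc (N * (4 * ((N : ℝ) ^ 5)⁻¹)) ^ 2 = 16 * ((N : ℝ) ^ 3)⁻¹ * ((N : ℝ) ^ 5)⁻¹ := by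
        field_simp
        norm_num
    _ ≤ 16 * ((2 : ℝ) ^ 3)⁻¹ * ((N : ℝ) ^ 5)⁻¹ := by gcongr
    _ = 2 * ((N : ℝ) ^ 5)⁻¹ := by norm_num

theorem gFun_mapsTo_Icc (hN : 2 ≤ N) :
    MapsTo (gFun N) (Icc 0 (4 * ((N : ℝ) ^ 5)⁻¹)) (Icc 0 (4 * ((N : ℝ) ^ 5)⁻¹)) := by
  rintro s ⟨hs₀, hs⟩
  have hs₁ : s ≤ 1 := by linarith [four_mul_inv_pow_five_le_one_eighth hN]
  have hinv : 0 ≤ ((N : ℝ) ^ 5)⁻¹ := by positivity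
  refine ⟨hinv.trans (inv_pow_five_le_gFun N hs₁), ?_⟩
  calc gFun N s ≤ (N * s) ^ 2 + ((N : ℝ) ^ 5)⁻¹ :=
        gFun_le_sq_add_inv_pow_five N hs₀ (by linarith)
    _ ≤ (N * (4 * ((N : ℝ) ^ 5)⁻¹)) ^ 2 + ((N : ℝ) ^ 5)⁻¹ := by gcongr
    _ ≤ 4 * ((N : ℝ) ^ 5)⁻¹ := by linarith [mul_four_mul_inv_pow_five_sq_le hN]

end InvariantInterval

theorem foldr_cons_mem_of_mapsTo {ι α : Type*} {f : ι → α → α} {S : ι → Set α} {a : α}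
    {i : ι} {l : List ι} (hf : ∀ j ∈ i :: l, MapsTo (f j) (S j) (S j))
    (ha : ∀ j ∈ i :: l, a ∈ S j) (hS : (i :: l).IsChain fun j k => S k ⊆ S j) :
    (i :: l).foldr f a ∈ S i := by
  induction l generalizing i with
  | nil => exact hf i (by simp) (ha i (by simp))
  | cons k l ih =>
    rw [List.isChain_cons_cons] at hS
    have htail : (k :: l).foldr f a ∈ S k :=
      ih (fun j hj => hf j (.tail i hj)) (fun j hj => ha j (.tail i hj)) hS.2
    exact hf i (by simp) (hS.1 htail)

theorem sortedLE_map_range' {α : Type*} [Preorder α] {f : ℕ → α} {k m : ℕ}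
    (hf : MonotoneOn f (Ico k (k + m))) : ((List.range' k m).map f).SortedLE := by
  refine (List.pairwise_map.mpr ?_).sortedLE
  refine List.Pairwise.imp_of_mem (fun hi hj hij => ?_) (List.pairwise_lt_range' ..)
  exact hf (List.mem_range'_1.mp hi) (List.mem_range'_1.mp hj) hij.le

theorem foldr_gFun_cons_mem_Icc {M : ℕ} {l : List ℕ} (hM : 2 ≤ M) (hl : (M :: l).SortedLE) :
    (M :: l).foldr gFun 0 ∈ Icc 0 (4 * ((M : ℝ) ^ 5)⁻¹) := by
  have hpair := hl.pairwise
  have htwo : ∀ j ∈ M :: l, 2 ≤ j :=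
    List.forall_mem_cons.mpr ⟨hM, fun j hj => hM.trans (List.rel_of_pairwise_cons hpair hj)⟩
  refine foldr_cons_mem_of_mapsTo (S := fun j : ℕ => Icc 0 (4 * ((j : ℝ) ^ 5)⁻¹))
    (fun j hj => gFun_mapsTo_Icc (htwo j hj)) (fun j _ => ⟨le_rfl, by positivity⟩)
    (hpair.imp_of_mem fun {j k} hj _ hjk => ?_).isChain
  have hj₀ : (0 : ℝ) < j := by exact_mod_cast two_pos.trans_le (htwo j hj)
  exact Icc_subset_Icc_right (by gcongr)

/-- For a nondecreasing finite sequence `(N_k)_{k=1}^n` of integers with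
`N 1 ≥ 2`, the composition `(g_{N_k} ∘ ⋯ ∘ g_{N_n})(0)` is at most `4 N_k ^ (-5)` for every
`1 ≤ k ≤ n`; in particular `(g_{N_1} ∘ ⋯ ∘ g_{N_n})(0) ≤ 1/8`. -/
theorem gFun_composition_bound
    (n : ℕ) (N : ℕ → ℕ) (hN1 : 2 ≤ N 1)
    (hmono : ∀ i j, 1 ≤ i → i ≤ j → j ≤ n → N i ≤ N j) :
    (∀ K, 1 ≤ K → K ≤ n →
      (List.range' K (n + 1 - K)).foldr (fun i s => gFun (N i) s) 0 ≤ 4 * ((N K : ℝ) ^ 5)⁻¹) ∧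
    (List.range' 1 n).foldr (fun i s => gFun (N i) s) 0 ≤ 1 / 8 := by
  have hbound : ∀ K, 1 ≤ K → K ≤ n →
      (List.range' K (n + 1 - K)).foldr (fun i s => gFun (N i) s) 0 ≤
        4 * ((N K : ℝ) ^ 5)⁻¹ := by
    intro K hK hKn
    have hsorted : ((List.range' K (n + 1 - K)).map N).SortedLE :=
      sortedLE_map_range' fun i ⟨hi, _⟩ j ⟨_, hj⟩ hij => hmono i j (hK.trans hi) hij (by omega)
    rw [← List.foldr_map]
    rw [show n + 1 - K = (n - K) + 1 by omega, List.range'_succ, List.map_cons] at hsorted ⊢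
    exact (foldr_gFun_cons_mem_Icc (hN1.trans (hmono 1 K le_rfl hK hKn)) hsorted).2
  refine ⟨hbound, ?_⟩
  rcases n.eq_zero_or_pos with rfl | hn
  · norm_num
  · exact (hbound 1 le_rfl hn).trans (four_mul_inv_pow_five_le_one_eighth hN1)
end
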